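/- Let b be a prime and α ∈ ℕ with α ≥ 2. If k, l ∈ ℕ₀ satisfy κ(k ⊖ l) > 2α, then K̂_α(k, l) = 0. -/

import Mathlib

/-!
Splitting off the first `b`-adic digit, `x = (i + x') / b`, turns a Walsh coefficient of index `k`
into a combination of coefficients of index `k / b` of the rescaled function on the branches `i`,
with phases that are characters of `ℤ/bℤ` and cancel unless they are trivial. For a polynomial of
one variable the branches differ by polynomials of lower degree, so every nonzero digit of `k`
lowers the degree by one, and the coefficient vanishes when the degree is less than `κ(k)`. Hence
a polynomial in `x` and `y` has vanishing `(k, l)`-coefficient when its total degree is less than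
`κ(k) + κ(l)`, in particular when it is less than `κ(k ⊖ l)`.

For `p(|x - y|)`, the branches `(i, j)` with `i ≠ j` carry a polynomial in `x - y`, because there
`x - y` has constant sign, and the diagonal branches all carry the same function of `|x - y|`.
The first index at which the digits of `k` and `l` differ therefore kills the coefficient as soon
as the degree of `p` plus one is less than `κ(k ⊖ l)`. The kernel has degree `2α` exactly, but its
top term is harmless since `|x - y| ^ (2α) = (x - y) ^ (2α)` is a polynomial.
-/

open scoped BigOperators

/-- The `i`-th digit (starting from `i = 0`) of the `b`-adic expansion of `k`. -/
def bdigit (b k i : ℕ) : ℕ := k / b ^ i % b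

/-- The set of indices of nonzero `b`-adic digits of `k`. -/
def bsupp (b k : ℕ) : Finset ℕ := (Finset.range (k + 1)).filter fun i => bdigit b k i ≠ 0

/-- The Hamming metric `κ(k)`: the number of nonzero `b`-adic digits of `k`. -/
def hamming (b k : ℕ) : ℕ := (bsupp b k).card

/-- The Dick metric `μ_α(k)`: the sum of the `min(v, α)` largest exponents-plus-one
`a_1 > a_2 > ⋯` of the nonzero `b`-adic digits of `k`. -/
def dick (b α k : ℕ) : ℕ := ((((bsupp b k).sort (· ≤ ·)).reverse.take α).map (· + 1)).sum

/-- Digitwise addition `k ⊕ l` modulo `b` of the `b`-adic digits. -/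
def dadd (b k l : ℕ) : ℕ :=
  ∑ i ∈ Finset.range (k + l + 1), (bdigit b k i + bdigit b l i) % b * b ^ i

/-- Digitwise subtraction `k ⊖ l` modulo `b` of the `b`-adic digits. -/
def dsub (b k l : ℕ) : ℕ :=
  ∑ i ∈ Finset.range (k + l + 1), (bdigit b k i + (b - bdigit b l i)) % b * b ^ i

/-- Hamming metric of a vector: sum over coordinates. -/
def hammingVec (b : ℕ) {s : ℕ} (k : Fin s → ℕ) : ℕ := ∑ j, hamming b (k j)

/-- Dick metric of a vector: sum over coordinates. -/
def dickVec (b α : ℕ) {s : ℕ} (k : Fin s → ℕ) : ℕ := ∑ j, dick b α (k j)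

open MeasureTheory

/-- The `i`-th (for `i ≥ 1`) `b`-adic digit `ξ_i` of a real number `x ∈ [0,1)`, using the
expansion in which infinitely many digits differ from `b - 1`. -/
noncomputable def rdigit (b : ℕ) (x : ℝ) (i : ℕ) : ℤ := ⌊x * (b : ℝ) ^ i⌋ % b

/-- The `k`-th `b`-adic Walsh function, `wal_k(x) = ω_b^{κ_0 ξ_1 + κ_1 ξ_2 + ⋯}` where
`ω_b = exp(2π√-1/b)`, `κ` are the `b`-adic digits of `k` and `ξ` those of `x`. -/
noncomputable def walsh (b k : ℕ) (x : ℝ) : ℂ :=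
  Complex.exp (2 * (Real.pi : ℂ) * Complex.I / (b : ℂ) *
    ∑ a ∈ Finset.range (k + 1), (bdigit b k a : ℂ) * (rdigit b x (a + 1) : ℂ))

/-- The `k`-th `b`-adic Walsh function on `[0,1)^s`, `wal_k(x) = ∏_j wal_{k_j}(x_j)`. -/
noncomputable def walshVec (b : ℕ) {s : ℕ} (k : Fin s → ℕ) (x : Fin s → ℝ) : ℂ :=
  ∏ j, walsh b (k j) (x j)

/-- The Bernoulli polynomial `B_r` evaluated at a real number. -/
noncomputable def bernoulliPoly (r : ℕ) (x : ℝ) : ℝ := Polynomial.aeval x (Polynomial.bernoulli r)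

/-- The reproducing kernel `K_α` of the Sobolev space `H_α`:
`K_α(x,y) = ∑_{r=0}^{α} B_r(x)B_r(y)/(r!)² + (-1)^{α+1} B_{2α}(|x-y|)/(2α)!`. -/
noncomputable def Kker (α : ℕ) (x y : ℝ) : ℝ :=
  ∑ r ∈ Finset.range (α + 1), bernoulliPoly r x * bernoulliPoly r y / ((r.factorial : ℝ)) ^ 2
    + (-1 : ℝ) ^ (α + 1) * bernoulliPoly (2 * α) |x - y| / ((2 * α).factorial : ℝ)

/-- The `(k,l)`-th Walsh coefficient of the kernel `K_α`. -/
noncomputable def Khat (b α : ℕ) (k l : ℕ) : ℂ :=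
  ∫ x in Set.Ico (0 : ℝ) 1, ∫ y in Set.Ico (0 : ℝ) 1,
    (Kker α x y : ℂ) * (starRingEnd ℂ) (walsh b k x) * walsh b l y

/-- The `(k,l)`-th Walsh coefficient of the `s`-variate kernel
`K_{α,s}(x,y) = ∏_j K_α(x_j, y_j)`. -/
noncomputable def KhatS (b α s : ℕ) (k l : Fin s → ℕ) : ℂ :=
  ∫ x in Set.univ.pi fun _ : Fin s => Set.Ico (0 : ℝ) 1,
    ∫ y in Set.univ.pi fun _ : Fin s => Set.Ico (0 : ℝ) 1,
      ((∏ j, Kker α (x j) (y j) : ℝ) : ℂ) * (starRingEnd ℂ) (walshVec b k x) * walshVec b l y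

/-- The `k`-th Walsh coefficient `b̂_r(k)` of the normalized Bernoulli polynomial `B_r/r!`. -/
noncomputable def bhat (b r k : ℕ) : ℂ :=
  ∫ x in Set.Ico (0 : ℝ) 1,
    ((bernoulliPoly r x / (r.factorial : ℝ) : ℝ) : ℂ) * (starRingEnd ℂ) (walsh b k x)

/-- The `(k,l)`-th Walsh coefficient `b̂_{r,per}(k,l)` of `(x,y) ↦ B̃_r(x-y)/r!`, where
`B̃_r` is the 1-periodic extension of the Bernoulli polynomial `B_r` from `[0,1)` to `ℝ`. -/
noncomputable def bhatPer (b r : ℕ) (k l : ℕ) : ℂ :=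
  ∫ x in Set.Ico (0 : ℝ) 1, ∫ y in Set.Ico (0 : ℝ) 1,
    ((bernoulliPoly r (Int.fract (x - y)) / (r.factorial : ℝ) : ℝ) : ℂ) *
      (starRingEnd ℂ) (walsh b k x) * walsh b l y

open ComplexConjugate Polynomial
open Set (Ico Icc)
open Finset (range)
open ContinuousMap (fst snd)

section Digits

lemma bdigit_zero_right (b k : ℕ) : bdigit b k 0 = k % b := by simp [bdigit]

lemma bdigit_succ (b k i : ℕ) : bdigit b k (i + 1) = bdigit b (k / b) i := by
  simp [bdigit, pow_succ', Nat.div_div_eq_div_mul]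

lemma bdigit_sum_mul_pow {b : ℕ} {c : ℕ → ℕ} (hc : ∀ i, c i < b) (N j : ℕ) :
    bdigit b (∑ i ∈ range N, c i * b ^ i) j = if j < N then c j else 0 := by
  induction N generalizing c j with
  | zero => simp [bdigit]
  | succ N ih =>
    have hsum : ∑ i ∈ range (N + 1), c i * b ^ i
        = c 0 + b * ∑ i ∈ range N, c (i + 1) * b ^ i := by
      rw [Finset.sum_range_succ', Finset.mul_sum, pow_zero, mul_one, add_comm]
      exact congrArg (c 0 + ·) (Finset.sum_congr rfl fun i _ => by ring)
    rw [hsum]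
    cases j with
    | zero => simp [bdigit_zero_right, Nat.mod_eq_of_lt (hc 0)]
    | succ j =>
      rw [bdigit_succ, Nat.add_mul_div_left _ _ (Nat.zero_lt_of_lt (hc 0)),
        Nat.div_eq_of_lt (hc 0), zero_add, ih fun i => hc (i + 1)]
      simp only [add_lt_add_iff_right]

lemma add_sub_mod_eq_zero_iff {b m n : ℕ} (hm : m < b) (hn : n < b) :
    (m + (b - n)) % b = 0 ↔ m = n := by
  rcases lt_or_ge m n with hmn | hnm
  · rw [Nat.mod_eq_of_lt (by lia)]
    lia
  · rw [show m + (b - n) = m - n + b by lia, Nat.add_mod_right, Nat.mod_eq_of_lt (by lia)]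
    lia

variable {b : ℕ} (hb : 1 < b)
include hb

lemma bdigit_eq_zero_of_le {k i : ℕ} (h : k ≤ i) : bdigit b k i = 0 := by
  rw [bdigit, Nat.div_eq_of_lt (h.trans_lt (Nat.lt_pow_self hb)), Nat.zero_mod]

lemma mem_bsupp {k i : ℕ} : i ∈ bsupp b k ↔ bdigit b k i ≠ 0 := by
  rw [bsupp, Finset.mem_filter, Finset.mem_range, and_iff_right_iff_imp]
  intro hi
  by_contra! hki
  exact hi (bdigit_eq_zero_of_le hb (by lia))

lemma hamming_eq_sum {k N : ℕ} (hN : k ≤ N) :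
    hamming b k = ∑ i ∈ range N, if bdigit b k i = 0 then 0 else 1 := by
  have hsupp : bsupp b k = (range N).filter fun i => bdigit b k i ≠ 0 := by
    ext i
    rw [mem_bsupp hb, Finset.mem_filter, Finset.mem_range, iff_and_self]
    intro hi
    by_contra! hNi
    exact hi (bdigit_eq_zero_of_le hb (hN.trans hNi))
  simp only [hamming, hsupp, Finset.card_filter, ne_eq, ite_not]

lemma hamming_eq_ite_add (k : ℕ) :
    hamming b k = (if k % b = 0 then 0 else 1) + hamming b (k / b) := by
  rw [hamming_eq_sum hb (Nat.le_succ k), Finset.sum_range_succ',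
    hamming_eq_sum hb (Nat.div_le_self k b), add_comm]
  simp only [bdigit_zero_right, bdigit_succ]

lemma bdigit_dsub (k l i : ℕ) :
    bdigit b (dsub b k l) i = (bdigit b k i + (b - bdigit b l i)) % b := by
  rw [dsub, bdigit_sum_mul_pow fun i => Nat.mod_lt _ (by lia)]
  split_ifs with hi
  · rfl
  · rw [bdigit_eq_zero_of_le hb (by lia : k ≤ i), bdigit_eq_zero_of_le hb (by lia : l ≤ i)]
    simp

lemma bdigit_dsub_eq_zero_iff {k l i : ℕ} :
    bdigit b (dsub b k l) i = 0 ↔ bdigit b k i = bdigit b l i := by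
  rw [bdigit_dsub hb]
  exact add_sub_mod_eq_zero_iff (Nat.mod_lt _ (by lia)) (Nat.mod_lt _ (by lia))

lemma hamming_dsub_eq_ite_add (k l : ℕ) :
    hamming b (dsub b k l) =
      (if k % b = l % b then 0 else 1) + hamming b (dsub b (k / b) (l / b)) := by
  set N := dsub b k l + dsub b (k / b) (l / b)
  rw [hamming_eq_sum hb (by lia : dsub b k l ≤ N + 1), Finset.sum_range_succ',
    hamming_eq_sum hb (by lia : dsub b (k / b) (l / b) ≤ N), add_comm]
  simp only [bdigit_dsub_eq_zero_iff hb]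
  simp only [bdigit_zero_right, bdigit_succ]

lemma hamming_dsub_le_add (k l : ℕ) : hamming b (dsub b k l) ≤ hamming b k + hamming b l := by
  refine (Finset.card_le_card fun i hi => ?_).trans (Finset.card_union_le _ _)
  rw [mem_bsupp hb, ne_eq, bdigit_dsub_eq_zero_iff hb] at hi
  rw [Finset.mem_union, mem_bsupp hb, mem_bsupp hb]
  by_contra! h
  exact hi (h.1.trans h.2.symm)

end Digits

lemma hamming_zero (b : ℕ) : hamming b 0 = 0 := by
  simp [hamming, bsupp, bdigit]

section Walsh

/-- The primitive `b`-th root of unity `ω_b` whose powers are the values of the Walsh functions. -/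
noncomputable def walshRoot (b : ℕ) : ℂ := Complex.exp (2 * Real.pi * Complex.I / b)

lemma norm_walshRoot (b : ℕ) : ‖walshRoot b‖ = 1 := by
  rw [walshRoot, Complex.norm_exp]
  simp

lemma conj_walshRoot (b : ℕ) : conj (walshRoot b) = (walshRoot b)⁻¹ :=
  (Complex.inv_eq_conj (norm_walshRoot b)).symm

lemma sum_conj_walshRoot_pow_mul_pow {b d e : ℕ} (hd : d < b) (he : e < b) (hde : d ≠ e) :
    ∑ i ∈ range b, conj (walshRoot b ^ (d * i)) * walshRoot b ^ (e * i) = 0 := by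
  have hω : IsPrimitiveRoot (walshRoot b) b := Complex.isPrimitiveRoot_exp b (by lia)
  have hω0 : walshRoot b ≠ 0 := hω.ne_zero (by lia)
  set z := walshRoot b ^ e / walshRoot b ^ d with hz
  have hz1 : z ≠ 1 := fun h =>
    hde (hω.pow_inj hd he ((div_eq_one_iff_eq (pow_ne_zero d hω0)).1 h).symm)
  have hzb : z ^ b = 1 := by
    rw [hz, div_pow, pow_right_comm, pow_right_comm _ d, hω.pow_eq_one, one_pow, one_pow, div_one]
  calc ∑ i ∈ range b, conj (walshRoot b ^ (d * i)) * walshRoot b ^ (e * i)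
      = ∑ i ∈ range b, z ^ i := Finset.sum_congr rfl fun i _ => by
        rw [map_pow, conj_walshRoot, inv_pow, pow_mul, pow_mul, hz, div_pow, div_eq_inv_mul]
    _ = 0 := by rw [geom_sum_eq hz1, hzb, sub_self, zero_div]

lemma walsh_eq_zpow (b k : ℕ) (x : ℝ) :
    walsh b k x = walshRoot b ^ ∑ a ∈ range (k + 1), (bdigit b k a : ℤ) * rdigit b x (a + 1) := by
  rw [walsh, walshRoot, ← Complex.exp_int_mul, mul_comm]
  push_cast
  rfl

lemma walsh_eq_zpow_of_le {b k N : ℕ} (hb : 1 < b) (hN : k ≤ N) (x : ℝ) :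
    walsh b k x = walshRoot b ^ ∑ a ∈ range N, (bdigit b k a : ℤ) * rdigit b x (a + 1) := by
  have hzero (a : ℕ) (ha : a ≥ k) : (bdigit b k a : ℤ) * rdigit b x (a + 1) = 0 := by
    rw [bdigit_eq_zero_of_le hb ha, Nat.cast_zero, zero_mul]
  rw [walsh_eq_zpow, Finset.eventually_constant_sum hzero k.le_succ,
    Finset.eventually_constant_sum hzero hN]

lemma norm_walsh (b k : ℕ) (x : ℝ) : ‖walsh b k x‖ = 1 := by
  rw [walsh_eq_zpow, norm_zpow, norm_walshRoot, one_zpow]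

@[fun_prop]
lemma measurable_walsh (b k : ℕ) : Measurable (walsh b k) := by
  have hdigit (a : ℕ) : Measurable fun x => rdigit b x (a + 1) :=
    (measurable_from_top (f := (· % (b : ℤ)))).comp (by fun_prop)
  simp only [funext (walsh_eq_zpow b k)]
  exact (measurable_from_top (f := (walshRoot b ^ · : ℤ → ℂ))).comp
    (Finset.measurable_fun_sum _ fun a _ => (hdigit a).const_mul _)

lemma rdigit_one_natCast_add_div {b i : ℕ} (hi : i < b) {x : ℝ} (hx : x ∈ Ico (0 : ℝ) 1) :
    rdigit b ((i + x) / b) 1 = i := by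
  have hb : (b : ℝ) ≠ 0 := by exact_mod_cast (Nat.zero_lt_of_lt hi).ne'
  rw [rdigit, pow_one, div_mul_cancel₀ _ hb, Int.floor_natCast_add, Int.floor_eq_zero_iff.2 hx,
    add_zero]
  exact_mod_cast Nat.mod_eq_of_lt hi

lemma rdigit_add_two_natCast_add_div {b : ℕ} (hb : b ≠ 0) (i a : ℕ) (x : ℝ) :
    rdigit b ((i + x) / b) (a + 2) = rdigit b x (a + 1) := by
  have hshift : (i + x) / b * (b : ℝ) ^ (a + 2)
      = x * (b : ℝ) ^ (a + 1) + ((i * b ^ a * b : ℤ) : ℝ) := by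
    push_cast
    field_simp
    ring
  rw [rdigit, hshift, Int.floor_add_intCast, Int.add_mul_emod_self_right, rdigit]

lemma walsh_natCast_add_div {b i : ℕ} (hb : 1 < b) (hi : i < b) (k : ℕ) {x : ℝ}
    (hx : x ∈ Ico (0 : ℝ) 1) :
    walsh b k ((i + x) / b) = walshRoot b ^ (k % b * i) * walsh b (k / b) x := by
  have hω : walshRoot b ≠ 0 := norm_ne_zero_iff.1 (by rw [norm_walshRoot]; exact one_ne_zero)
  rw [walsh_eq_zpow, walsh_eq_zpow_of_le hb (Nat.div_le_self k b), ← zpow_natCast, ← zpow_add₀ hω,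
    Finset.sum_range_succ', add_comm]
  simp only [rdigit_one_natCast_add_div hi hx, rdigit_add_two_natCast_add_div (by lia : b ≠ 0),
    bdigit_zero_right, bdigit_succ]
  push_cast
  rfl

end Walsh

section Integrals

lemma integrableOn_continuousMap_mul {X : Type*} [TopologicalSpace X] [MeasurableSpace X]
    [OpensMeasurableSpace X] [SecondCountableTopology X] [T2Space X] {μ : Measure X}
    [IsFiniteMeasureOnCompacts μ] {s t : Set X} (ht : IsCompact t) (hst : s ⊆ t) (f : C(X, ℝ))
    {g : X → ℂ} (hg : Measurable g) (hg1 : ∀ x, ‖g x‖ ≤ 1) :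
    IntegrableOn (fun x => (f x : ℂ) * g x) s μ := by
  have hf : IntegrableOn (fun x => (f x : ℂ)) s μ :=
    ((Complex.continuous_ofReal.comp f.continuous).continuousOn.integrableOn_compact
      ht).mono_set hst
  exact hf.mul_bdd hg.aestronglyMeasurable (ae_of_all _ hg1)

/-- The inverse branch `x ↦ (i + x) / b` of the `b`-adic shift: it prepends the digit `i` to the
`b`-adic expansion of `x ∈ [0,1)`. -/
noncomputable def prependDigit (b i : ℕ) : C(ℝ, ℝ) := ⟨fun x => (i + x) / b, by fun_prop⟩

lemma prependDigit_apply (b i : ℕ) (x : ℝ) : prependDigit b i x = (i + x) / b := rfl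

lemma setIntegral_Ico_eq_sum_prependDigit {E : Type*} [NormedAddCommGroup E] [NormedSpace ℝ E]
    {b : ℕ} (hb : b ≠ 0) {f : ℝ → E} (hf : IntegrableOn f (Ico 0 1)) :
    ∫ x in Ico (0 : ℝ) 1, f x =
      (b : ℝ)⁻¹ • ∑ i ∈ range b, ∫ x in Ico (0 : ℝ) 1, f (prependDigit b i x) := by
  have hb0 : (b : ℝ) ≠ 0 := Nat.cast_ne_zero.2 hb
  have hinterval (g : ℝ → E) : ∫ x in Ico (0 : ℝ) 1, g x = ∫ x in (0 : ℝ)..1, g x := by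
    rw [intervalIntegral.integral_of_le zero_le_one, integral_Ico_eq_integral_Ioc]
  have hf' : IntervalIntegrable f volume 0 1 :=
    (intervalIntegrable_iff_integrableOn_Ico_of_le zero_le_one).2 hf
  have hpieces := intervalIntegral.sum_integral_adjacent_intervals (f := f) (μ := volume)
    (a := fun i : ℕ => (i : ℝ) / b) (n := b) fun i hi => hf'.mono_set <| by
      rw [Set.uIcc_of_le zero_le_one, Set.uIcc_of_le (by gcongr; simp)]
      refine Set.Icc_subset_Icc (by positivity) (div_le_one_of_le₀ ?_ (by positivity))
      exact_mod_cast hi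
  simp only [Nat.cast_zero, zero_div, div_self hb0] at hpieces
  simp only [hinterval, prependDigit_apply, ← hpieces, Finset.smul_sum, add_div,
    intervalIntegral.inv_smul_integral_comp_add_div, zero_div, add_zero, Nat.cast_add, Nat.cast_one]

end Integrals

section UnivariateCoefficients

lemma integrableOn_mul_conj_walsh (b k : ℕ) (f : C(ℝ, ℝ)) :
    IntegrableOn (fun x => (f x : ℂ) * conj (walsh b k x)) (Ico 0 1) :=
  integrableOn_continuousMap_mul isCompact_Icc Set.Ico_subset_Icc_self f (by fun_prop)
    fun x => by rw [RCLike.norm_conj, norm_walsh]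

/-- The `k`-th `b`-adic Walsh coefficient of a continuous function, which matters only on `[0,1)`,
as a linear functional. -/
noncomputable def walshCoeff (b k : ℕ) : C(ℝ, ℝ) →ₗ[ℝ] ℂ where
  toFun f := ∫ x in Ico (0 : ℝ) 1, (f x : ℂ) * conj (walsh b k x)
  map_add' f g := by
    simp only [ContinuousMap.add_apply, Complex.ofReal_add, add_mul]
    exact integral_add (integrableOn_mul_conj_walsh b k f) (integrableOn_mul_conj_walsh b k g)
  map_smul' c f := by
    simp only [ContinuousMap.smul_apply, smul_eq_mul, Complex.ofReal_mul, mul_assoc,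
      integral_const_mul, RingHom.id_apply, Complex.real_smul]

lemma walshCoeff_apply (b k : ℕ) (f : C(ℝ, ℝ)) :
    walshCoeff b k f = ∫ x in Ico (0 : ℝ) 1, (f x : ℂ) * conj (walsh b k x) := rfl

lemma walshCoeff_eq_sum_prependDigit {b : ℕ} (hb : 1 < b) (k : ℕ) (f : C(ℝ, ℝ)) :
    walshCoeff b k f = (b : ℝ)⁻¹ • ∑ i ∈ range b,
      conj (walshRoot b ^ (k % b * i)) * walshCoeff b (k / b) (f.comp (prependDigit b i)) := by
  rw [walshCoeff_apply, setIntegral_Ico_eq_sum_prependDigit (by lia : b ≠ 0)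
    (integrableOn_mul_conj_walsh b k f)]
  refine congrArg _ (Finset.sum_congr rfl fun i hi => ?_)
  rw [walshCoeff_apply, ← integral_const_mul]
  refine setIntegral_congr_fun measurableSet_Ico fun x hx => ?_
  simp only [prependDigit_apply, ContinuousMap.comp_apply,
    walsh_natCast_add_div hb (Finset.mem_range.1 hi) k hx, map_mul]
  ring

end UnivariateCoefficients

section AffineSubstitution

variable {R : Type*} [CommRing R] [IsDomain R] {p : R[X]} {a : R} (ha : a ≠ 0)
include ha

lemma degree_comp_linear (c : R) : (p.comp (C a * X + C c)).degree = p.degree := by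
  rw [degree_comp (by simp [degree_linear ha]), degree_linear ha, mul_one]

lemma degree_comp_linear_sub_comp_linear_lt (hp : p ≠ 0) (c d : R) :
    (p.comp (C a * X + C c) - p.comp (C a * X + C d)).degree < p.degree := by
  have hne (e : R) : (C a * X + C e).natDegree ≠ 0 := by rw [natDegree_linear ha]; exact one_ne_zero
  rw [← degree_comp_linear (p := p) ha c]
  refine degree_sub_lt_left ?_ ?_ ?_
  · rw [degree_comp_linear ha, degree_comp_linear ha]
  · rwa [← degree_ne_bot, degree_comp_linear ha, degree_ne_bot]
  · rw [leadingCoeff_comp (hne c), leadingCoeff_comp (hne d), leadingCoeff_linear ha,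
      leadingCoeff_linear ha]

end AffineSubstitution

section PolynomialCoefficients

lemma aeval_id_comp_prependDigit (p : ℝ[X]) (b i : ℕ) :
    (aeval (ContinuousMap.id ℝ) p).comp (prependDigit b i) =
      aeval (ContinuousMap.id ℝ) (p.comp (C (b : ℝ)⁻¹ * X + C ((i : ℝ) / b))) := by
  ext x
  simp only [ContinuousMap.comp_apply, aeval_continuousMap_apply, ContinuousMap.id_apply,
    prependDigit_apply, eval_comp, eval_add, eval_mul, eval_C, eval_X]
  ring_nf

theorem walshCoeff_aeval_eq_zero {b : ℕ} (hb : 1 < b) {k : ℕ} {p : ℝ[X]}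
    (hp : p.degree < hamming b k) : walshCoeff b k (aeval (ContinuousMap.id ℝ) p) = 0 := by
  induction k using Nat.strong_induction_on generalizing p with
  | _ k ih =>
  rcases eq_or_ne p 0 with rfl | hp0
  · rw [map_zero, map_zero]
  have hk : k ≠ 0 := by
    rintro rfl
    rw [hamming_zero, degree_eq_natDegree hp0] at hp
    exact Nat.not_lt_zero _ (Nat.cast_lt.1 hp)
  have hlt : k / b < k := Nat.div_lt_self (Nat.pos_of_ne_zero hk) hb
  have hb0 : (b : ℝ)⁻¹ ≠ 0 := by positivity
  rw [walshCoeff_eq_sum_prependDigit hb]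
  simp only [aeval_id_comp_prependDigit]
  rw [hamming_eq_ite_add hb] at hp
  split_ifs at hp with hdigit
  · rw [zero_add] at hp
    simp only [ih _ hlt ((degree_comp_linear hb0 _).trans_lt hp), mul_zero, Finset.sum_const_zero,
      smul_zero]
  · rw [add_comm] at hp
    have hbranch (i : ℕ) :
        walshCoeff b (k / b) (aeval (.id ℝ) (p.comp (C (b : ℝ)⁻¹ * X + C ((i : ℝ) / b)))) =
          walshCoeff b (k / b) (aeval (.id ℝ) (p.comp (C (b : ℝ)⁻¹ * X + C 0))) := by
      rw [← sub_eq_zero, ← map_sub, ← map_sub]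
      exact ih _ hlt ((degree_comp_linear_sub_comp_linear_lt hb0 hp0 _ _).trans_le
        (Order.le_of_lt_succ hp))
    have hphases := sum_conj_walshRoot_pow_mul_pow (Nat.mod_lt k (by lia)) (by lia : 0 < b) hdigit
    simp only [zero_mul, pow_zero, mul_one] at hphases
    simp only [hbranch, ← Finset.sum_mul, hphases, zero_mul, smul_zero]

end PolynomialCoefficients

section BivariateCoefficients

lemma integrableOn_mul_conj_walsh_mul_walsh (b k l : ℕ) (F : C(ℝ × ℝ, ℝ)) :
    IntegrableOn (fun p : ℝ × ℝ => (F p : ℂ) * (conj (walsh b k p.1) * walsh b l p.2))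
      (Ico 0 1 ×ˢ Ico 0 1) :=
  integrableOn_continuousMap_mul (isCompact_Icc.prod isCompact_Icc)
    (Set.prod_mono Set.Ico_subset_Icc_self Set.Ico_subset_Icc_self) F (by fun_prop)
    fun p => by rw [norm_mul, RCLike.norm_conj, norm_walsh, norm_walsh, mul_one]

/-- The `(k, l)`-th `b`-adic Walsh coefficient of a continuous function of two variables, which
matters only on `[0,1)²`, as a linear functional. As for `Khat`, the complex conjugate is taken of
the Walsh function in the first variable only. -/
noncomputable def walshCoeff₂ (b k l : ℕ) : C(ℝ × ℝ, ℝ) →ₗ[ℝ] ℂ where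
  toFun F := ∫ p in Ico (0 : ℝ) 1 ×ˢ Ico (0 : ℝ) 1,
    (F p : ℂ) * (conj (walsh b k p.1) * walsh b l p.2)
  map_add' F G := by
    simp only [ContinuousMap.add_apply, Complex.ofReal_add, add_mul]
    exact integral_add (integrableOn_mul_conj_walsh_mul_walsh b k l F)
      (integrableOn_mul_conj_walsh_mul_walsh b k l G)
  map_smul' c F := by
    simp only [ContinuousMap.smul_apply, smul_eq_mul, Complex.ofReal_mul, mul_assoc,
      integral_const_mul, RingHom.id_apply, Complex.real_smul]

lemma walshCoeff₂_apply (b k l : ℕ) (F : C(ℝ × ℝ, ℝ)) :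
    walshCoeff₂ b k l F = ∫ p in Ico (0 : ℝ) 1 ×ˢ Ico (0 : ℝ) 1,
      (F p : ℂ) * (conj (walsh b k p.1) * walsh b l p.2) := rfl

lemma walshCoeff₂_eq_integral_integral (b k l : ℕ) (F : C(ℝ × ℝ, ℝ)) :
    walshCoeff₂ b k l F = ∫ x in Ico (0 : ℝ) 1, ∫ y in Ico (0 : ℝ) 1,
      (F (x, y) : ℂ) * (conj (walsh b k x) * walsh b l y) := by
  rw [walshCoeff₂_apply, Measure.volume_eq_prod, setIntegral_prod]
  exact integrableOn_mul_conj_walsh_mul_walsh b k l F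

lemma walshCoeff₂_congr (b k l : ℕ) {F G : C(ℝ × ℝ, ℝ)}
    (h : ∀ x ∈ Ico (0 : ℝ) 1, ∀ y ∈ Ico (0 : ℝ) 1, F (x, y) = G (x, y)) :
    walshCoeff₂ b k l F = walshCoeff₂ b k l G := by
  refine setIntegral_congr_fun (measurableSet_Ico.prod measurableSet_Ico) fun p hp => ?_
  simp only [h p.1 hp.1 p.2 hp.2]

lemma walshCoeff₂_comp_fst_mul_comp_snd (b k l : ℕ) (f g : C(ℝ, ℝ)) :
    walshCoeff₂ b k l (f.comp fst * g.comp snd) = walshCoeff b k f * conj (walshCoeff b l g) := by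
  rw [walshCoeff₂_apply, walshCoeff_apply, walshCoeff_apply, ← integral_conj,
    Measure.volume_eq_prod, ← setIntegral_prod_mul]
  congr 1 with p
  simp only [ContinuousMap.mul_apply, ContinuousMap.comp_apply, ContinuousMap.fst_apply,
    ContinuousMap.snd_apply, map_mul, Complex.ofReal_mul, Complex.conj_ofReal, Complex.conj_conj]
  ring

lemma walshCoeff₂_comp_prodSwap (b k l : ℕ) (F : C(ℝ × ℝ, ℝ)) :
    walshCoeff₂ b k l (F.comp .prodSwap) = conj (walshCoeff₂ b l k F) := by
  rw [walshCoeff₂_apply, walshCoeff₂_apply, ← integral_conj, Measure.volume_eq_prod,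
    ← setIntegral_prod_swap]
  congr 1 with p
  simp only [ContinuousMap.comp_apply, ContinuousMap.prodSwap_apply, map_mul, Complex.conj_ofReal,
    Complex.conj_conj, Prod.fst_swap, Prod.snd_swap]
  ring

variable {b : ℕ} (hb : 1 < b)
include hb

lemma walshCoeff₂_eq_sum_prependDigit_left (k l : ℕ) (F : C(ℝ × ℝ, ℝ)) :
    walshCoeff₂ b k l F = (b : ℝ)⁻¹ • ∑ i ∈ range b, conj (walshRoot b ^ (k % b * i)) *
      walshCoeff₂ b (k / b) l (F.comp ((prependDigit b i).prodMap (.id ℝ))) := by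
  have hintegrable : Integrable (fun x => ∫ y in Ico (0 : ℝ) 1,
      (F (x, y) : ℂ) * (conj (walsh b k x) * walsh b l y)) (volume.restrict (Ico 0 1)) := by
    have h := integrableOn_mul_conj_walsh_mul_walsh b k l F
    rw [IntegrableOn, Measure.volume_eq_prod, ← Measure.prod_restrict] at h
    exact h.integral_prod_left
  rw [walshCoeff₂_eq_integral_integral,
    setIntegral_Ico_eq_sum_prependDigit (by lia : b ≠ 0) hintegrable]
  refine congrArg _ (Finset.sum_congr rfl fun i hi => ?_)
  rw [walshCoeff₂_eq_integral_integral, ← integral_const_mul]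
  refine setIntegral_congr_fun measurableSet_Ico fun x hx => ?_
  simp only [← integral_const_mul]
  refine integral_congr_ae (ae_of_all _ fun y => ?_)
  simp only [prependDigit_apply, ContinuousMap.comp_apply, ContinuousMap.prodMap_apply,
    Prod.map_apply, ContinuousMap.id_apply,
    walsh_natCast_add_div hb (Finset.mem_range.1 hi) k hx, map_mul]
  ring

lemma walshCoeff₂_eq_sum_prependDigit_right (k l : ℕ) (F : C(ℝ × ℝ, ℝ)) :
    walshCoeff₂ b k l F = (b : ℝ)⁻¹ • ∑ j ∈ range b, walshRoot b ^ (l % b * j) *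
      walshCoeff₂ b k (l / b) (F.comp ((ContinuousMap.id ℝ).prodMap (prependDigit b j))) := by
  have hswap : walshCoeff₂ b k l F = conj (walshCoeff₂ b l k (F.comp .prodSwap)) :=
    walshCoeff₂_comp_prodSwap b k l (F.comp .prodSwap)
  rw [hswap, walshCoeff₂_eq_sum_prependDigit_left hb]
  rw [Complex.real_smul, Complex.real_smul, map_mul, map_sum, Complex.conj_ofReal]
  refine congrArg _ (Finset.sum_congr rfl fun j _ => ?_)
  rw [map_mul, Complex.conj_conj, ← walshCoeff₂_comp_prodSwap]
  rfl

theorem walshCoeff₂_eq_sum_prependDigit (k l : ℕ) (F : C(ℝ × ℝ, ℝ)) :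
    walshCoeff₂ b k l F = (b : ℝ)⁻¹ • ∑ i ∈ range b, conj (walshRoot b ^ (k % b * i)) *
      ((b : ℝ)⁻¹ • ∑ j ∈ range b, walshRoot b ^ (l % b * j) * walshCoeff₂ b (k / b) (l / b)
        (F.comp ((prependDigit b i).prodMap (prependDigit b j)))) := by
  rw [walshCoeff₂_eq_sum_prependDigit_left hb]
  refine congrArg _ (Finset.sum_congr rfl fun i _ => ?_)
  rw [walshCoeff₂_eq_sum_prependDigit_right hb]
  rfl

end BivariateCoefficients

section DiagonalKernels

lemma aeval_abs_sub_comp_prependDigit_self (p : ℝ[X]) (b i : ℕ) :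
    (aeval (|fst - snd| : C(ℝ × ℝ, ℝ)) p).comp ((prependDigit b i).prodMap (prependDigit b i)) =
      aeval |fst - snd| (p.comp (C (b : ℝ)⁻¹ * X + C 0)) := by
  ext ⟨x, y⟩
  have habs : |((i : ℝ) + x) / b - (i + y) / b| = (b : ℝ)⁻¹ * |x - y| + 0 := by
    rw [← sub_div, abs_div, Nat.abs_cast, add_sub_add_left_eq_sub]
    ring
  simp [aeval_continuousMap_apply, prependDigit_apply, habs]

variable {b : ℕ} (hb : 1 < b)
include hb

lemma walshCoeff₂_aeval_fst_mul_aeval_snd_eq_zero {k l : ℕ} {p q : ℝ[X]}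
    (h : p.natDegree + q.natDegree < hamming b k + hamming b l) :
    walshCoeff₂ b k l (aeval fst p * aeval snd q) = 0 := by
  have hfst : aeval (fst : C(ℝ × ℝ, ℝ)) p = (aeval (ContinuousMap.id ℝ) p).comp fst := by
    ext; simp
  have hsnd : aeval (snd : C(ℝ × ℝ, ℝ)) q = (aeval (ContinuousMap.id ℝ) q).comp snd := by
    ext; simp
  rw [hfst, hsnd, walshCoeff₂_comp_fst_mul_comp_snd]
  have hcases : p.natDegree < hamming b k ∨ q.natDegree < hamming b l := by lia
  rcases hcases with hp | hq
  · rw [walshCoeff_aeval_eq_zero hb (degree_le_natDegree.trans_lt (Nat.cast_lt.2 hp)), zero_mul]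
  · rw [walshCoeff_aeval_eq_zero hb (degree_le_natDegree.trans_lt (Nat.cast_lt.2 hq)), map_zero,
      mul_zero]

lemma walshCoeff₂_fst_sub_snd_pow_eq_zero {k l n : ℕ} (hn : n < hamming b k + hamming b l) :
    walshCoeff₂ b k l ((fst - snd) ^ n) = 0 := by
  rw [sub_eq_add_neg, add_pow, map_sum]
  refine Finset.sum_eq_zero fun m hm => ?_
  have hterm : fst ^ m * (-snd) ^ (n - m) * (n.choose m : C(ℝ × ℝ, ℝ))
      = aeval fst (X ^ m : ℝ[X]) * aeval snd ((-X) ^ (n - m) * (n.choose m : ℝ[X])) := by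
    simp only [map_pow, map_mul, map_neg, map_natCast, aeval_X, mul_assoc]
  rw [hterm]
  refine walshCoeff₂_aeval_fst_mul_aeval_snd_eq_zero hb (lt_of_le_of_lt ?_ hn)
  have hq : ((-X) ^ (n - m) * (n.choose m : ℝ[X])).natDegree ≤ n - m := by compute_degree
  rw [natDegree_X_pow]
  have := Finset.mem_range.1 hm
  lia

theorem walshCoeff₂_aeval_sub_eq_zero {k l : ℕ} {p : ℝ[X]}
    (hp : p.degree < (hamming b k + hamming b l : ℕ)) :
    walshCoeff₂ b k l (aeval (fst - snd) p) = 0 := by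
  rcases eq_or_ne p 0 with rfl | hp0
  · rw [map_zero, map_zero]
  rw [degree_eq_natDegree hp0, Nat.cast_lt] at hp
  rw [aeval_eq_sum_range, map_sum]
  refine Finset.sum_eq_zero fun n hn => ?_
  rw [map_smul, walshCoeff₂_fst_sub_snd_pow_eq_zero hb (by grind), smul_zero]

lemma walshCoeff₂_aeval_abs_sub_comp_prependDigit_eq_zero {k l i j : ℕ} (hij : i ≠ j)
    {p : ℝ[X]} (hp : p.degree < (hamming b k + hamming b l : ℕ)) :
    walshCoeff₂ b k l ((aeval (|fst - snd| : C(ℝ × ℝ, ℝ)) p).comp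
      ((prependDigit b i).prodMap (prependDigit b j))) = 0 := by
  obtain ⟨ε, hε0, hε⟩ : ∃ ε : ℝ, ε ≠ 0 ∧ ∀ x ∈ Ico (0 : ℝ) 1, ∀ y ∈ Ico (0 : ℝ) 1,
      |(i + x) - (j + y)| = ε * ((i + x) - (j + y)) := by
    rcases lt_or_gt_of_ne hij with h | h
    · have h' : (i : ℝ) + 1 ≤ j := by exact_mod_cast h
      refine ⟨-1, by norm_num, fun x hx y hy => ?_⟩
      rw [abs_of_nonpos (by linarith [hx.2, hy.1]), neg_one_mul]
    · have h' : (j : ℝ) + 1 ≤ i := by exact_mod_cast h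
      refine ⟨1, one_ne_zero, fun x hx y hy => ?_⟩
      rw [abs_of_nonneg (by linarith [hx.1, hy.2]), one_mul]
  have hb0 : (b : ℝ) ≠ 0 := by positivity
  rw [← degree_comp_linear (div_ne_zero hε0 hb0) (ε * (i - j) / b)] at hp
  rw [← walshCoeff₂_aeval_sub_eq_zero hb hp]
  refine walshCoeff₂_congr b k l fun x hx y hy => ?_
  have habs : |((i : ℝ) + x) / b - (j + y) / b| = ε / b * (x - y) + ε * (i - j) / b := by
    rw [← sub_div, abs_div, Nat.abs_cast, hε x hx y hy]
    ring
  simp [aeval_continuousMap_apply, prependDigit_apply, habs]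

lemma walshCoeff₂_aeval_abs_sub_eq_smul {k l : ℕ} {p : ℝ[X]}
    (hp : p.degree < (hamming b (k / b) + hamming b (l / b) : ℕ)) :
    walshCoeff₂ b k l (aeval |fst - snd| p) = (b : ℝ)⁻¹ • (b : ℝ)⁻¹ •
      ((∑ i ∈ range b, conj (walshRoot b ^ (k % b * i)) * walshRoot b ^ (l % b * i)) *
        walshCoeff₂ b (k / b) (l / b)
          (aeval |fst - snd| (p.comp (C (b : ℝ)⁻¹ * X + C 0)))) := by
  rw [walshCoeff₂_eq_sum_prependDigit hb]
  congr 1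
  rw [Finset.sum_mul, Finset.smul_sum]
  refine Finset.sum_congr rfl fun i hi => ?_
  have hoff (j : ℕ) (hji : j ≠ i) :=
    walshCoeff₂_aeval_abs_sub_comp_prependDigit_eq_zero hb hji.symm hp
  rw [Finset.sum_eq_single_of_mem i hi fun j _ hji => by rw [hoff j hji, mul_zero],
    aeval_abs_sub_comp_prependDigit_self, mul_smul_comm, mul_assoc]

theorem walshCoeff₂_aeval_abs_sub_eq_zero {k l n : ℕ} {p : ℝ[X]} (hp : p.degree < n)
    (hn : n < hamming b (dsub b k l)) : walshCoeff₂ b k l (aeval |fst - snd| p) = 0 := by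
  induction hkl : k + l using Nat.strong_induction_on generalizing k l p with
  | _ N ih =>
  subst hkl
  have hlt : k / b + l / b < k + l := by
    have hpos : k + l ≠ 0 := by
      intro h0
      obtain ⟨rfl, rfl⟩ := Nat.add_eq_zero_iff.1 h0
      have := hamming_dsub_le_add hb 0 0
      rw [hamming_zero] at this
      lia
    have hk : k / b ≤ k / 2 := Nat.div_le_div_left hb two_pos
    have hl : l / b ≤ l / 2 := Nat.div_le_div_left hb two_pos
    lia
  rw [hamming_dsub_eq_ite_add hb] at hn
  have hquot : n ≤ hamming b (k / b) + hamming b (l / b) := by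
    have := hamming_dsub_le_add hb (k / b) (l / b)
    split_ifs at hn <;> lia
  rw [walshCoeff₂_aeval_abs_sub_eq_smul hb (hp.trans_le (Nat.cast_le.2 hquot))]
  split_ifs at hn with hdigit
  · have hb0 : (b : ℝ)⁻¹ ≠ 0 := by positivity
    rw [zero_add] at hn
    rw [ih _ hlt ((degree_comp_linear hb0 0).trans_lt hp) hn rfl, mul_zero, smul_zero, smul_zero]
  · rw [sum_conj_walshRoot_pow_mul_pow (Nat.mod_lt k (by lia)) (Nat.mod_lt l (by lia)) hdigit,
      zero_mul, smul_zero, smul_zero]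

theorem walshCoeff₂_aeval_abs_sub_eq_zero_of_natDegree_le {k l m : ℕ} {p : ℝ[X]}
    (hp : p.natDegree ≤ 2 * m) (hm : 2 * m < hamming b (dsub b k l)) :
    walshCoeff₂ b k l (aeval |fst - snd| p) = 0 := by
  have hlow : (p.erase (2 * m)).degree < (2 * m : ℕ) := by
    refine (degree_lt_iff_coeff_zero _ _).2 fun n hn => ?_
    rw [coeff_erase]
    split_ifs with h
    · rfl
    · exact coeff_eq_zero_of_natDegree_lt (by lia)
  have htop : aeval (|fst - snd| : C(ℝ × ℝ, ℝ)) (monomial (2 * m) (p.coeff (2 * m))) =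
      p.coeff (2 * m) • (fst - snd) ^ (2 * m) := by
    ext z
    simp [aeval_monomial, pow_mul, sq_abs]
  rw [← monomial_add_erase p (2 * m), map_add, map_add, htop, map_smul,
    walshCoeff₂_fst_sub_snd_pow_eq_zero hb (hm.trans_le (hamming_dsub_le_add hb k l)),
    walshCoeff₂_aeval_abs_sub_eq_zero hb hlow hm, smul_zero, add_zero]

end DiagonalKernels

section Kernel

/-- The Bernoulli polynomial `B_r` with real coefficients. -/
noncomputable def realBernoulli (r : ℕ) : ℝ[X] := (Polynomial.bernoulli r).map (algebraMap ℚ ℝ)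

lemma eval_realBernoulli (r : ℕ) (x : ℝ) : (realBernoulli r).eval x = bernoulliPoly r x :=
  eval_map_algebraMap _ _

lemma natDegree_realBernoulli_le (r : ℕ) : (realBernoulli r).natDegree ≤ r := by
  refine natDegree_map_le.trans (natDegree_sum_le_of_forall_le _ _ fun i hi => ?_)
  exact (natDegree_monomial_le _).trans (by grind)

/-- The kernel `K_α` as a continuous function on `ℝ × ℝ`. -/
noncomputable def kernelMap (α : ℕ) : C(ℝ × ℝ, ℝ) :=
  ∑ r ∈ range (α + 1), ((r.factorial : ℝ) ^ 2)⁻¹ •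
      (aeval fst (realBernoulli r) * aeval snd (realBernoulli r)) +
    ((-1) ^ (α + 1) / ((2 * α).factorial : ℝ)) • aeval |fst - snd| (realBernoulli (2 * α))

lemma kernelMap_apply (α : ℕ) (x y : ℝ) : kernelMap α (x, y) = Kker α x y := by
  simp only [kernelMap, Kker, ContinuousMap.add_apply, ContinuousMap.coe_sum, Finset.sum_apply,
    ContinuousMap.smul_apply, ContinuousMap.mul_apply, aeval_continuousMap_apply,
    ContinuousMap.fst_apply, ContinuousMap.snd_apply, ContinuousMap.abs_apply,
    ContinuousMap.sub_apply, eval_realBernoulli, smul_eq_mul]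
  congr 1
  · exact Finset.sum_congr rfl fun r _ => inv_mul_eq_div _ _
  · exact div_mul_eq_mul_div _ _ _

lemma khat_eq_walshCoeff₂ (b α k l : ℕ) : Khat b α k l = walshCoeff₂ b k l (kernelMap α) := by
  rw [walshCoeff₂_eq_integral_integral]
  simp only [Khat, kernelMap_apply, mul_assoc]

end Kernel

theorem khat_sparse_general {b : ℕ} (hb : 1 < b) {α k l : ℕ} (h : 2 * α < hamming b (dsub b k l)) :
    Khat b α k l = 0 := by
  have hprod (r : ℕ) (hr : r ∈ range (α + 1)) :
      walshCoeff₂ b k l (aeval fst (realBernoulli r) * aeval snd (realBernoulli r)) = 0 := by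
    have hdeg := natDegree_realBernoulli_le r
    have hdigits := hamming_dsub_le_add hb k l
    exact walshCoeff₂_aeval_fst_mul_aeval_snd_eq_zero hb (by grind)
  have hdiag : walshCoeff₂ b k l (aeval |fst - snd| (realBernoulli (2 * α))) = 0 :=
    walshCoeff₂_aeval_abs_sub_eq_zero_of_natDegree_le hb (natDegree_realBernoulli_le _) h
  rw [khat_eq_walshCoeff₂, kernelMap, map_add, map_sum, map_smul, hdiag, smul_zero, add_zero]
  exact Finset.sum_eq_zero fun r hr => by rw [map_smul, hprod r hr, smul_zero]

/-- Proposition 3. For a prime `b` and `α ≥ 2`, if `k, l ∈ ℕ₀` satisfy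
`κ(k ⊖ l) > 2α`, then the Walsh coefficient `K̂_α(k,l)` of the kernel vanishes. -/
theorem khat_sparse (b α : ℕ) (hb : b.Prime) (hα : 2 ≤ α) (k l : ℕ)
    (h : 2 * α < hamming b (dsub b k l)) : Khat b α k l = 0 :=
  khat_sparse_general hb.one_lt h
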